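/- arXiv:2408.07411 — 2 statements merged into one kernel-verified Lean document; each statement's English description precedes it below -/
import Mathlib

section
/- Let Γ ≅ L ⊕ H be a finite Abelian group in the class 𝒢, where |H| is odd, |L| = 2^η with η ≥ 2, and L has more than one involution. Set l = 2·exp(L) if exp(L) = |L|/2 and l = max{4, exp(L)} otherwise. Let k > 1 divide |H| and put m = k·l. Then there exist a complete mapping φ of Γ and a partition S_1, S_2, …, S_t of the elements of Γ such that |S_i| = m, ∑_{s∈S_i} s = 0 and ∑_{s∈S_i} φ(s) = 0 for every i with 1 ≤ i ≤ t. -/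
/-!
A complete mapping of `L × H` is obtained from one of `L` and the identity of `H`, doubling being
bijective on a group of odd order. If `L` is already partitioned into blocks of even size `l` with
zero sum and zero `φ`-sum, split each block into two halves and take any partition of `H` into
sets `A` of size `k`: the union of the sets `{t} × A` for `t` in the first half and `{t} × (-A)` for
`t` in the second half has size `k * l`, its `H`-components cancel, and its `L`-component is `k`
times a zero sum (`FibrePartition.prod_odd`). So everything reduces to the 2-group `L`.

If `N ≤ L` and `L ⧸ N` have complete mappings, so has `L`, with cosets of `N` going to cosets
of `N` (`extMap_isCM`); since the elements of a group with a complete mapping sum to zero, the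
cosets of `N` are suitable blocks as soon as `|N|` kills `L` (`FibrePartition.ext`). A counting
argument comparing the kernel and the image of doubling (`TwoInv.trichotomy`) shows that an abelian
2-group with at least two involutions either

* has a cyclic subgroup of index two, so is `ℤ/2n × ℤ/2`, with the explicit complete mapping
  `baseMap` and the whole group as single block; or
* is `(ℤ/2)³`, with multiplication by a primitive element of the field of order eight; or
* has a subgroup `N` of order `max 4 (exp L)` such that `N` and `L ⧸ N` both have at least two
  involutions.

Induction on the order gives complete mappings in all cases (`TwoInv.exists_isCM`), and the
trichotomy then yields blocks of the required size (`TwoInv.fibrePartition`).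
-/

/-- `Γ` belongs to the class `𝒢`: its order is odd or it has more than one involution. -/
def InClassG (Γ : Type*) [AddCommGroup Γ] [Fintype Γ] : Prop :=
  Odd (Fintype.card Γ) ∨ 1 < Nat.card {g : Γ // g ≠ 0 ∧ g + g = 0}

/-- There exist a complete mapping `φ` of `Γ` and a partition of `Γ` into sets of size `m`,
each of which is zero-sum and whose image under `φ` is zero-sum. -/
def HasZeroSumCMPartition (Γ : Type*) [AddCommGroup Γ] [Fintype Γ] (m : ℕ) : Prop :=
  ∃ (φ : Γ → Γ) (t : ℕ) (S : Fin t → Finset Γ),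
    Function.Bijective φ ∧
    Function.Bijective (fun x : Γ => x + φ x) ∧
    (∀ g : Γ, ∃! i, g ∈ S i) ∧
    (∀ i, (S i).card = m) ∧
    (∀ i, ∑ s ∈ S i, s = 0) ∧
    (∀ i, ∑ s ∈ S i, φ s = 0)

/-! ### Complete mappings and partitions -/

/-- `φ` is a complete mapping of `G`. -/
def IsCM {G : Type*} [AddCommGroup G] (φ : G → G) : Prop :=
  Function.Bijective φ ∧ Function.Bijective (fun x => x + φ x)

/-- `G` has at least two involutions. -/
def TwoInv (G : Type*) [AddCommGroup G] : Prop :=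
  ∃ a b : G, a ≠ 0 ∧ b ≠ 0 ∧ a ≠ b ∧ a + a = 0 ∧ b + b = 0

/-- `G` has a complete mapping `φ` and a partition into blocks of size `m` such that each block
and its image under `φ` sum to zero. The blocks are the fibres of a labelling `p`, so that
disjointness and covering hold by construction. -/
def FibrePartition (G : Type*) [AddCommGroup G] [Fintype G] (m : ℕ) : Prop :=
  ∃ φ : G → G, IsCM φ ∧ ∃ (r : ℕ) (p : G → Fin r), ∀ i,
    (Finset.univ.filter fun x => p x = i).card = m ∧
    ∑ x with p x = i, x = 0 ∧ ∑ x with p x = i, φ x = 0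

lemma FibrePartition.of_map {G ι : Type*} [AddCommGroup G] [Fintype G] [Fintype ι] [DecidableEq ι]
    {m : ℕ} {φ : G → G} (hφ : IsCM φ) (p : G → ι)
    (h : ∀ i, (Finset.univ.filter fun x => p x = i).card = m ∧
      ∑ x with p x = i, x = 0 ∧ ∑ x with p x = i, φ x = 0) : FibrePartition G m := by
  refine ⟨φ, hφ, Fintype.card ι, fun x => Fintype.equivFin ι (p x), fun i => ?_⟩
  have key : (Finset.univ.filter fun x => Fintype.equivFin ι (p x) = i)
      = Finset.univ.filter fun x => p x = (Fintype.equivFin ι).symm i := by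
    ext x; simp [Equiv.eq_symm_apply]
  rw [key]
  exact h _

lemma IsCM.congr {G G' : Type*} [AddCommGroup G] [AddCommGroup G'] (e : G ≃+ G') {φ : G' → G'}
    (h : IsCM φ) : IsCM (fun x => e.symm (φ (e x))) := by
  refine ⟨e.symm.bijective.comp (h.1.comp e.bijective), ?_⟩
  have : (fun x => x + e.symm (φ (e x))) = e.symm ∘ (fun x => x + φ x) ∘ e := by
    ext x; simp
  rw [this]
  exact e.symm.bijective.comp (h.2.comp e.bijective)

lemma FibrePartition.congr {G G' : Type*} [AddCommGroup G] [AddCommGroup G'] [Fintype G]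
    [Fintype G'] (e : G ≃+ G') {m : ℕ} (h : FibrePartition G' m) : FibrePartition G m := by
  obtain ⟨φ, hφ, r, p, hp⟩ := h
  refine ⟨_, hφ.congr e, r, fun x => p (e x), fun i => ?_⟩
  obtain ⟨h1, h2, h3⟩ := hp i
  have key : (Finset.univ.filter fun x => p x = i)
      = (Finset.univ.filter fun x => p (e x) = i).map e.toEquiv.toEmbedding := by
    ext y
    simp only [Finset.mem_filter, Finset.mem_univ, true_and, Finset.mem_map_equiv]
    simp
  rw [key] at h1 h2 h3
  simp only [Finset.card_map, Finset.sum_map, Equiv.coe_toEmbedding, AddEquiv.toEquiv_eq_coe,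
    EquivLike.coe_coe] at h1 h2 h3
  refine ⟨h1, ?_, ?_⟩
  · apply e.injective
    rw [map_sum, h2, map_zero]
  · rw [← map_sum, h3, map_zero]

lemma FibrePartition.hasZeroSum {G : Type*} [AddCommGroup G] [Fintype G] {m : ℕ}
    (h : FibrePartition G m) : HasZeroSumCMPartition G m := by
  obtain ⟨φ, hφ, r, p, hp⟩ := h
  refine ⟨φ, r, fun i => Finset.univ.filter fun x => p x = i, hφ.1, hφ.2, fun g => ?_,
    fun i => (hp i).1, fun i => (hp i).2.1, fun i => (hp i).2.2⟩
  exact ⟨p g, by simp, fun i hi => (Finset.mem_filter.1 hi).2.symm⟩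

/-- Both `∑ φ x` and `∑ (x + φ x)` equal `∑ x`, so `∑ x = 0`. -/
lemma IsCM.sum_eq_zero {G : Type*} [AddCommGroup G] [Fintype G] {φ : G → G} (h : IsCM φ) :
    ∑ x, x = (0 : G) := by
  have h1 : ∑ x, φ x = ∑ x, x := Function.Bijective.sum_comp h.1 (fun x => x)
  have h2 : ∑ x, (x + φ x) = ∑ x, x := Function.Bijective.sum_comp h.2 (fun x => x)
  rw [Finset.sum_add_distrib, h1] at h2
  simpa using h2

lemma FibrePartition.whole {G : Type*} [AddCommGroup G] [Fintype G] {φ : G → G} (h : IsCM φ) :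
    FibrePartition G (Fintype.card G) := by
  refine FibrePartition.of_map h (fun _ => ()) fun _ => ?_
  simp only [Finset.filter_true, Finset.card_univ, true_and]
  exact ⟨h.sum_eq_zero, (Function.Bijective.sum_comp h.1 (fun x => x)).trans h.sum_eq_zero⟩

/-! ### Extensions -/

section Extension

variable {G : Type*} [AddCommGroup G] (N : AddSubgroup G)

/-- The element of `N` carrying the chosen representative of the coset of `g` to `g`. -/
noncomputable def rem (g : G) : N :=
  ⟨g - (QuotientAddGroup.mk (s := N) g).out, by
    rw [← QuotientAddGroup.eq_zero_iff, QuotientAddGroup.mk_sub, QuotientAddGroup.out_eq',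
      sub_self]⟩

lemma out_add_rem (g : G) : (QuotientAddGroup.mk (s := N) g).out + (rem N g : G) = g := by
  simp [rem]

/-- A map that sends the coset `q` to the coset `f q`, acting inside cosets through `h`, is
injective if `f` and `h` are. -/
lemma ext_injective {f : G ⧸ N → G ⧸ N} (hf : f.Injective) {h : N → N} (hh : h.Injective)
    (c : G ⧸ N → G) (hc : ∀ q, QuotientAddGroup.mk (s := N) (c q) = f q) :
    Function.Injective fun g : G => c (QuotientAddGroup.mk g) + (h (rem N g) : G) := by
  intro g g' hgg
  have hz : ∀ n : N, QuotientAddGroup.mk (s := N) (n : G) = 0 := fun n =>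
    (QuotientAddGroup.eq_zero_iff _).2 n.2
  have h1 := congrArg (QuotientAddGroup.mk (s := N)) hgg
  simp only [QuotientAddGroup.mk_add, hz, hc, add_zero] at h1
  have h2 := hf h1
  simp only [h2, add_right_inj] at hgg
  have h3 := hh (Subtype.ext hgg)
  rw [← out_add_rem N g, ← out_add_rem N g', h2, h3]

/-- The complete mapping of `G` built from complete mappings of `N` and `G ⧸ N`. -/
noncomputable def extMap (φQ : G ⧸ N → G ⧸ N) (φN : N → N) (g : G) : G :=
  (φQ (QuotientAddGroup.mk g)).out + (φN (rem N g) : G)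

variable {N}

lemma extMap_isCM [Finite G] {φQ : G ⧸ N → G ⧸ N} (hQ : IsCM φQ) {φN : N → N} (hN : IsCM φN) :
    IsCM (extMap N φQ φN) := by
  constructor
  · exact Finite.injective_iff_bijective.1
      (ext_injective N hQ.1.1 hN.1.1 (fun q => (φQ q).out) fun q => QuotientAddGroup.out_eq' _)
  · have := ext_injective N hQ.2.1 hN.2.1 (fun q => q.out + (φQ q).out)
      fun q => by rw [QuotientAddGroup.mk_add, QuotientAddGroup.out_eq', QuotientAddGroup.out_eq']
    refine Finite.injective_iff_bijective.1 ?_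
    convert this using 2 with g
    rw [extMap, AddSubgroup.coe_add, add_add_add_comm, out_add_rem]

lemma sum_coset [Fintype G] [DecidableEq (G ⧸ N)] [Fintype N] {M : Type*} [AddCommMonoid M] (F : G → M)
    (q : G ⧸ N) :
    ∑ x with QuotientAddGroup.mk (s := N) x = q, F x = ∑ n : N, F (q.out + n) := by
  symm
  refine Finset.sum_bij (fun n _ => q.out + (n : G)) ?_ ?_ ?_ fun _ _ => rfl
  · intro n _
    simp
  · intro n _ n' _ h
    exact Subtype.ext (add_left_cancel h)
  · intro g hg
    simp only [Finset.mem_filter, Finset.mem_univ, true_and] at hg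
    subst hg
    exact ⟨rem N g, Finset.mem_univ _, out_add_rem N g⟩

lemma extMap_coset (φQ : G ⧸ N → G ⧸ N) (φN : N → N) (q : G ⧸ N) (n : N) :
    extMap N φQ φN (q.out + n) = (φQ q).out + (φN n : G) := by
  have h1 : QuotientAddGroup.mk (s := N) (q.out + (n : G)) = q := by
    simp
  have h2 : rem N (q.out + (n : G)) = n := by
    apply Subtype.ext
    have := out_add_rem N (q.out + (n : G))
    rw [h1] at this
    exact add_left_cancel this
  simp only [extMap, h1, h2]

/-- The cosets of `N` form a zero-sum partition as soon as `|N|` kills `G`. -/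
lemma FibrePartition.ext [Fintype G] {φQ : G ⧸ N → G ⧸ N} (hQ : IsCM φQ) {φN : N → N} (hN : IsCM φN)
    (hexp : ∀ g : G, Nat.card N • g = 0) : FibrePartition G (Nat.card N) := by
  classical
  have := Fintype.ofFinite N
  have := Fintype.ofFinite (G ⧸ N)
  have hs : ∑ n : N, (n : G) = 0 := by
    have := congrArg N.subtype hN.sum_eq_zero
    rwa [map_sum, map_zero] at this
  have hs' : ∑ n : N, (φN n : G) = 0 :=
    (Function.Bijective.sum_comp hN.1 (fun n : N => (n : G))).trans hs
  have hc : ∀ g : G, ∑ _n : N, g = 0 := fun g => by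
    rw [Finset.sum_const, Finset.card_univ, ← Nat.card_eq_fintype_card, hexp]
  refine FibrePartition.of_map (extMap_isCM hQ hN) (QuotientAddGroup.mk (s := N)) fun q => ?_
  refine ⟨?_, ?_, ?_⟩
  · rw [Finset.card_eq_sum_ones, sum_coset]
    simp
  · rw [sum_coset (fun x => x), Finset.sum_add_distrib, hc, hs, add_zero]
  · rw [sum_coset]
    simp only [extMap_coset]
    rw [Finset.sum_add_distrib, hc, hs', add_zero]

end Extension

/-! ### Base cases -/

/-- A complete mapping of `ℤ/2n × ℤ/2`: `(i, 0) ↦ (i, [i ≥ n])` and `(i, 1) ↦ (i + 1, [i + 1 < n])`,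
residues being represented in `[0, 2n)`. -/
def baseMap (n : ℕ) (x : ZMod (2 * n) × ZMod 2) : ZMod (2 * n) × ZMod 2 :=
  if x.2 = 0 then (x.1, if x.1.val < n then 0 else 1)
  else (x.1 + 1, if (x.1 + 1).val < n then 1 else 0)

lemma eq_of_double {n : ℕ} (hn : 0 < n) {i j : ZMod (2 * n)} (h : i + i = j + j)
    (hij : i.val < n ↔ j.val < n) : i = j := by
  have : NeZero (2 * n) := ⟨by omega⟩
  apply ZMod.val_injective
  have h1 := congrArg ZMod.val h
  rw [ZMod.val_add, ZMod.val_add, ← two_mul, ← two_mul, Nat.mul_mod_mul_left,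
    Nat.mul_mod_mul_left] at h1
  have hi := ZMod.val_lt i
  have hj := ZMod.val_lt j
  by_cases hlt : i.val < n
  · have hlt' := hij.1 hlt
    rw [Nat.mod_eq_of_lt hlt, Nat.mod_eq_of_lt hlt'] at h1
    omega
  · have hlt' : ¬ j.val < n := fun h => hlt (hij.2 h)
    rw [Nat.mod_eq_sub_mod (by omega), Nat.mod_eq_sub_mod (a := j.val) (by omega),
      Nat.mod_eq_of_lt (by omega), Nat.mod_eq_of_lt (by omega)] at h1
    omega

lemma double_ne {n : ℕ} (i j : ZMod (2 * n)) : i + i ≠ j + (j + 1) := by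
  intro h
  have h1 := congrArg (ZMod.castHom (Dvd.intro n rfl : 2 ∣ 2 * n) (ZMod 2)) h
  simp only [map_add, map_one] at h1
  generalize ZMod.castHom (Dvd.intro n rfl : 2 ∣ 2 * n) (ZMod 2) i = a at h1
  generalize ZMod.castHom (Dvd.intro n rfl : 2 ∣ 2 * n) (ZMod 2) j = b at h1
  revert a b; decide

lemma baseMap_isCM {n : ℕ} (hn : 0 < n) : IsCM (baseMap n) := by
  have : NeZero (2 * n) := ⟨by omega⟩
  have h01 : ∀ a : ZMod 2, a ≠ 0 → a = 1 := by decide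
  have e1 : (1 : ZMod 2) + 1 = 0 := by decide
  have e2 : (1 : ZMod 2) ≠ 0 := by decide
  constructor
  · refine Finite.injective_iff_bijective.1 ?_
    rintro ⟨i, a⟩ ⟨j, b⟩ h
    simp only [baseMap] at h
    by_cases ha : a = 0 <;> by_cases hb : b = 0 <;>
      simp only [ha, hb, if_true, if_false, Prod.mk.injEq] at h
    · rw [h.1, ha, hb]
    · obtain ⟨rfl, h⟩ := h
      split_ifs at h <;> simp_all
    · obtain ⟨rfl, h⟩ := h
      split_ifs at h <;> simp_all
    · rw [add_right_cancel h.1, h01 a ha, h01 b hb]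
  · refine Finite.injective_iff_bijective.1 ?_
    rintro ⟨i, a⟩ ⟨j, b⟩ h
    simp only [baseMap] at h
    by_cases ha : a = 0 <;> by_cases hb : b = 0 <;>
      simp only [ha, hb, if_true, if_false, Prod.mk_add_mk, Prod.mk.injEq] at h
    · rw [eq_of_double hn h.1 (by
        have := h.2
        split_ifs at this <;> first | omega | simp_all), ha, hb]
    · exact absurd h.1 (double_ne i j)
    · exact absurd h.1.symm (double_ne j i)
    · rw [h01 a ha, h01 b hb] at h ⊢
      have h1 : (i + 1) + (i + 1) = (j + 1) + (j + 1) := by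
        have := congrArg (· + 1) h.1
        simpa [add_assoc, add_comm, add_left_comm] using this
      have := eq_of_double hn h1 (by
        have := h.2
        split_ifs at this <;> first | omega | simp_all)
      rw [add_right_cancel this]

/-- On `(ℤ/2)³` viewed as a cubic extension of `𝔽₂`, multiplication by a root of `X³ + X + 1` is
a complete mapping, and both it and the identity sum to zero on the cosets of a plane. -/
lemma FibrePartition.cube : FibrePartition (ZMod 2 × ZMod 2 × ZMod 2) 4 := by
  refine ⟨fun x => (x.2.2, x.1 + x.2.2, x.2.1), ⟨?_, ?_⟩, 2, fun x => x.1, ?_⟩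
  · exact Finite.injective_iff_bijective.1 (by unfold Function.Injective; decide)
  · exact Finite.injective_iff_bijective.1 (by unfold Function.Injective; decide)
  · decide

/-! ### Counting involutions -/

section Involutions

variable {G : Type*} [AddCommGroup G]

/-- The doubling endomorphism of an abelian group. -/
abbrev dbl (G : Type*) [AddCommGroup G] : G →+ G := nsmulAddMonoidHom 2

lemma mem_ker_dbl {g : G} : g ∈ (dbl G).ker ↔ g + g = 0 := by
  rw [AddMonoidHom.mem_ker, nsmulAddMonoidHom_apply, two_nsmul]

lemma card_ker_mul_card_range {H : Type*} [AddCommGroup H] (f : G →+ H) :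
    Nat.card f.ker * Nat.card f.range = Nat.card G := by
  rw [← AddSubgroup.index_ker, AddSubgroup.card_mul_index]

lemma TwoInv.four_le [Finite G] (h : TwoInv G) : 4 ≤ Nat.card (dbl G).ker := by
  classical
  obtain ⟨a, b, ha, hb, hab, ha2, hb2⟩ := h
  have h0 : a + b ≠ 0 := fun h => hab (by
    rw [eq_neg_of_add_eq_zero_left h, eq_comm]; exact eq_neg_of_add_eq_zero_left hb2)
  have h1 : ((({0, a, b, a + b} : Finset G) : Set G)).ncard ≤ ((dbl G).ker : Set G).ncard := by
    apply Set.ncard_le_ncard _ (Set.toFinite _)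
    intro x hx
    simp only [Finset.coe_insert, Finset.coe_singleton, Set.mem_insert_iff,
      Set.mem_singleton_iff] at hx
    rw [SetLike.mem_coe, mem_ker_dbl]
    rcases hx with rfl | rfl | rfl | rfl
    · simp
    · exact ha2
    · exact hb2
    · rw [add_add_add_comm, ha2, hb2, add_zero]
  rw [Set.ncard_coe_finset] at h1
  have h2 : ({0, a, b, a + b} : Finset G).card = 4 := by
    rw [Finset.card_insert_of_notMem, Finset.card_insert_of_notMem, Finset.card_insert_of_notMem,
      Finset.card_singleton]
    · simpa using ha
    · simp only [Finset.mem_insert, Finset.mem_singleton, not_or]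
      exact ⟨hab, fun h => hb (by simpa using h.symm)⟩
    · simp only [Finset.mem_insert, Finset.mem_singleton, not_or]
      exact ⟨ha.symm, hb.symm, h0.symm⟩
  rw [h2] at h1
  exact h1

lemma twoInv_of_card [Finite G] (h : 2 < Nat.card (dbl G).ker) : TwoInv G := by
  classical
  have := Fintype.ofFinite (dbl G).ker
  rw [Nat.card_eq_fintype_card, ← Finset.card_univ] at h
  have h1 : 1 < ((Finset.univ : Finset (dbl G).ker).erase 0).card := by
    rw [Finset.card_erase_of_mem (Finset.mem_univ _)]; omega
  obtain ⟨a, ha, b, hb, hab⟩ := Finset.one_lt_card.1 h1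
  refine ⟨a, b, ?_, ?_, ?_, mem_ker_dbl.1 a.2, mem_ker_dbl.1 b.2⟩
  · simpa using Finset.ne_of_mem_erase ha
  · simpa using Finset.ne_of_mem_erase hb
  · simpa using hab

lemma TwoInv.of_subgroup {N : AddSubgroup G} {a b : G} (ha : a ∈ N) (hb : b ∈ N) (ha0 : a ≠ 0)
    (hb0 : b ≠ 0) (hab : a ≠ b) (ha2 : a + a = 0) (hb2 : b + b = 0) : TwoInv N :=
  ⟨⟨a, ha⟩, ⟨b, hb⟩, by simpa [Subtype.ext_iff] using ha0, by simpa [Subtype.ext_iff] using hb0,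
    by simpa [Subtype.ext_iff] using hab, Subtype.ext ha2, Subtype.ext hb2⟩

lemma TwoInv.mono {N : AddSubgroup G} (h : TwoInv N) : TwoInv G := by
  obtain ⟨a, b, ha, hb, hab, ha2, hb2⟩ := h
  exact ⟨a, b, by simpa using ha, by simpa using hb, by simpa using hab,
    by simpa [Subtype.ext_iff] using ha2, by simpa [Subtype.ext_iff] using hb2⟩

/-- An abelian group killed by `2 ^ n` with at most one involution has order at most `2 ^ n`. -/
lemma card_le_of_not_twoInv (n : ℕ) : ∀ {A : Type*} [AddCommGroup A] [Finite A],
    ¬ TwoInv A → (∀ x : A, 2 ^ n • x = 0) → Nat.card A ≤ 2 ^ n := by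
  induction n with
  | zero =>
    intro A _ _ _ h
    have : Subsingleton A := ⟨fun a b => by simpa using (h a).trans (h b).symm⟩
    simp
  | succ n ih =>
    intro A _ _ hA h
    have h1 : Nat.card (dbl A).range ≤ 2 ^ n := by
      refine ih (fun h => hA h.mono) ?_
      rintro ⟨_, x, rfl⟩
      apply Subtype.ext
      simp only [nsmulAddMonoidHom_apply, AddSubgroup.coe_nsmul, ZeroMemClass.coe_zero]
      rw [← mul_nsmul', ← pow_succ]
      exact h x
    have h2 : Nat.card (dbl A).ker ≤ 2 := not_lt.1 fun h => hA (twoInv_of_card h)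
    rw [← card_ker_mul_card_range (dbl A), pow_succ, mul_comm]
    exact Nat.mul_le_mul h1 h2

/-- A subgroup of index at least `4` that contains all doubles gives, for each of its subgroups
`N`, at least two involutions in `G ⧸ N`: doubling on `G ⧸ N` has image of index at least `4`. -/
lemma twoInv_quotient [Finite G] {M N : AddSubgroup G} (hNM : N ≤ M) (hM : ∀ g : G, g + g ∈ M)
    (hcard : 4 * Nat.card M ≤ Nat.card G) : TwoInv (G ⧸ N) := by
  have hr : (dbl (G ⧸ N)).range ≤ M.map (QuotientAddGroup.mk' N) := by
    rintro _ ⟨q, rfl⟩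
    obtain ⟨g, rfl⟩ := QuotientAddGroup.mk_surjective q
    exact ⟨g + g, hM g, by simp [two_nsmul]⟩
  have h1 : Nat.card (dbl (G ⧸ N)).range ≤ Nat.card (M.map (QuotientAddGroup.mk' N)) :=
    Nat.card_le_card_of_injective _ (AddSubgroup.inclusion_injective hr)
  -- the restriction of the quotient map to `M` has kernel `N`, hence image of order `|M| / |N|`
  have h2 : Nat.card N * Nat.card (M.map (QuotientAddGroup.mk' N)) = Nat.card M := by
    rw [← card_ker_mul_card_range ((QuotientAddGroup.mk' N).comp M.subtype),
      AddMonoidHom.range_comp, AddSubgroup.range_subtype]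
    congr 1
    have : ((QuotientAddGroup.mk' N).comp M.subtype).ker = N.addSubgroupOf M := by
      ext x
      simp [AddMonoidHom.mem_ker, AddSubgroup.mem_addSubgroupOf]
    rw [this]
    exact (Nat.card_congr (AddSubgroup.addSubgroupOfEquivOfLe hNM).toEquiv).symm
  have h3 := AddSubgroup.card_eq_card_quotient_mul_card_addSubgroup N
  have h4 := card_ker_mul_card_range (dbl (G ⧸ N))
  have hN : 0 < Nat.card N := Nat.card_pos
  have hR : 0 < Nat.card (dbl (G ⧸ N)).range := Nat.card_pos
  apply twoInv_of_card
  by_contra hlt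
  have h5 : Nat.card (G ⧸ N) ≤ 2 * Nat.card (dbl (G ⧸ N)).range := by
    rw [← h4]; exact Nat.mul_le_mul_right _ (not_lt.1 hlt)
  have h6 : Nat.card G ≤ 2 * Nat.card M := by
    rw [h3, ← h2]
    nlinarith
  have hM0 : 0 < Nat.card M := Nat.card_pos
  omega

/-- In an abelian group of order `2 ^ a`, a subgroup of order at most `2 ^ c` is contained in one
of order exactly `2 ^ c`, for `c ≤ a`. -/
lemma exists_subgroup_ge [Finite G] {a c : ℕ} (hG : Nat.card G = 2 ^ a) (hc : c ≤ a)
    (V : AddSubgroup G) (hV : Nat.card V ≤ 2 ^ c) :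
    ∃ N : AddSubgroup G, V ≤ N ∧ Nat.card N = 2 ^ c := by
  have hdvd : Nat.card V ∣ 2 ^ a := hG ▸ AddSubgroup.card_addSubgroup_dvd_card V
  obtain ⟨b, -, hb⟩ := (Nat.dvd_prime_pow Nat.prime_two).1 hdvd
  have hbc : b ≤ c := (Nat.pow_le_pow_iff_right (by norm_num)).1 (hb ▸ hV)
  have : Fact (Nat.Prime 2) := ⟨Nat.prime_two⟩
  obtain ⟨K, hK, hVK⟩ := Sylow.exists_subgroup_card_pow_prime_le (G := Multiplicative G) 2
    (n := b) (m := c) (by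
      rw [show Nat.card (Multiplicative G) = 2 ^ a from hG]; exact pow_dvd_pow 2 hc)
    (AddSubgroup.toSubgroup V) hb hbc
  exact ⟨AddSubgroup.toSubgroup.symm K, hVK, hK⟩

lemma exists_subgroup_between [Finite G] {a c : ℕ} {V M : AddSubgroup G} (hVM : V ≤ M)
    (hM : Nat.card M = 2 ^ a) (hc : c ≤ a) (hV : Nat.card V ≤ 2 ^ c) :
    ∃ N : AddSubgroup G, V ≤ N ∧ N ≤ M ∧ Nat.card N = 2 ^ c := by
  obtain ⟨N, hVN, hN⟩ := exists_subgroup_ge hM hc (V.addSubgroupOf M)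
    (by rwa [Nat.card_congr (AddSubgroup.addSubgroupOfEquivOfLe hVM).toEquiv])
  refine ⟨N.map M.subtype, ?_, ?_, ?_⟩
  · intro v hv
    exact ⟨⟨v, hVM hv⟩, hVN (AddSubgroup.mem_addSubgroupOf.2 hv), rfl⟩
  · rintro _ ⟨x, -, rfl⟩
    exact x.2
  · rw [← hN]
    exact (Nat.card_congr (N.equivMapOfInjective _ M.subtype_injective).toEquiv).symm

lemma card_sup_zmultiples_le [Finite G] (D : AddSubgroup G) {a : G} (ha : a + a = 0) :
    Nat.card (D ⊔ AddSubgroup.zmultiples a : AddSubgroup G) ≤ Nat.card D * 2 := by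
  have h1 : Nat.card (AddSubgroup.zmultiples a) ≤ 2 := by
    rw [Nat.card_zmultiples]
    exact addOrderOf_le_of_nsmul_eq_zero (by norm_num) (by rw [two_nsmul, ha])
  have h2 : Nat.card ((D ⊔ AddSubgroup.zmultiples a : AddSubgroup G) : Set G)
      ≤ Nat.card (D : Set G) * Nat.card ((AddSubgroup.zmultiples a : AddSubgroup G) : Set G) := by
    rw [AddSubgroup.add_normal]
    exact Set.natCard_add_le
  exact h2.trans (Nat.mul_le_mul_left _ h1)

end Involutions

/-! ### Noncyclic abelian 2-groups -/

section TwoGroups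

variable {L : Type*} [AddCommGroup L]

/-- A cyclic group has at most one involution. -/
lemma TwoInv.exists_not_mem [Finite L] (h : TwoInv L) (x : L) :
    ∃ c : L, c + c = 0 ∧ c ∉ AddSubgroup.zmultiples x := by
  classical
  by_contra! hc
  obtain ⟨a, b, ha, hb, hab, ha2, hb2⟩ := h
  have h1 : TwoInv (AddSubgroup.zmultiples x) :=
    TwoInv.of_subgroup (hc a ha2) (hc b hb2) ha hb hab ha2 hb2
  have h2 := h1.four_le
  have := Fintype.ofFinite (AddSubgroup.zmultiples x)
  have h3 := IsAddCyclic.card_nsmul_eq_zero_le (α := AddSubgroup.zmultiples x) (n := 2) (by norm_num)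
  rw [← Fintype.card_subtype, ← Nat.card_eq_fintype_card] at h3
  have h4 : Nat.card (dbl (AddSubgroup.zmultiples x)).ker
      = Nat.card {a : AddSubgroup.zmultiples x // 2 • a = 0} := rfl
  omega

lemma exists_addOrderOf [Finite L] : ∃ x : L, addOrderOf x = AddMonoid.exponent L :=
  AddMonoid.exists_addOrderOf_eq_exponent AddMonoid.ExponentExists.of_finite

lemma TwoInv.exponent_lt [Finite L] (h : TwoInv L) : AddMonoid.exponent L < Nat.card L := by
  obtain ⟨x, hx⟩ := exists_addOrderOf (L := L)
  obtain ⟨c, -, hc⟩ := h.exists_not_mem x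
  rw [← hx, ← Nat.card_zmultiples]
  refine lt_of_le_of_ne (AddSubgroup.card_le_card_addGroup _) fun heq => hc ?_
  rw [(AddSubgroup.card_eq_iff_eq_top _).1 heq]
  trivial

/-- The case of a cyclic subgroup of index `2`: here `L ≃ ℤ/2n × ℤ/2`. -/
lemma exists_isCM_of_index_two [Finite L] (h : TwoInv L) {n : ℕ} (hn : 0 < n)
    (hexp : AddMonoid.exponent L = 2 * n) (hcard : Nat.card L = 2 * n * 2) :
    ∃ φ : L → L, IsCM φ := by
  obtain ⟨x, hx⟩ := exists_addOrderOf (L := L)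
  obtain ⟨c, hc2, hc⟩ := h.exists_not_mem x
  have : NeZero (2 * n) := ⟨by omega⟩
  have hx0 : ((2 * n : ℕ) : ℤ) • x = 0 := by
    rw [natCast_zsmul, ← hexp]; exact AddMonoid.exponent_nsmul_eq_zero x
  let f : ZMod (2 * n) →+ L := ZMod.lift (2 * n) ⟨(zmultiplesHom L) x, hx0⟩
  let g : ZMod 2 →+ L := ZMod.lift 2 ⟨(zmultiplesHom L) c, by
    simp [two_zsmul, hc2]⟩
  have hf : ∀ i : ZMod (2 * n), f i = i.val • x := fun i => by
    conv_lhs => rw [← ZMod.natCast_zmod_val i]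
    rw [← Int.cast_natCast, ZMod.lift_coe, zmultiplesHom_apply, natCast_zsmul]
  have hg1 : g 1 = c := by
    have := ZMod.lift_coe 2 ⟨(zmultiplesHom L) c, by simp [two_zsmul, hc2]⟩ 1
    simpa using this
  have hinj : Function.Injective (f.coprod g) := by
    rw [injective_iff_map_eq_zero]
    rintro ⟨i, j⟩ hij
    rw [AddMonoidHom.coprod_apply] at hij
    have hj01 : j = 0 ∨ j = 1 := (by decide : ∀ j : ZMod 2, j = 0 ∨ j = 1) j
    rcases hj01 with rfl | rfl
    · rw [map_zero, add_zero, hf] at hij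
      have h1 := addOrderOf_dvd_of_nsmul_eq_zero hij
      rw [hx, hexp] at h1
      have h2 := Nat.eq_zero_of_dvd_of_lt h1 (ZMod.val_lt i)
      rw [(ZMod.val_eq_zero i).1 h2]
      rfl
    · exfalso
      apply hc
      simp only [hg1, hf] at hij
      rw [eq_neg_of_add_eq_zero_right hij]
      exact neg_mem (AddSubgroup.nsmul_mem_zmultiples x _)
  have hbij : Function.Bijective (f.coprod g) := by
    rw [Nat.bijective_iff_injective_and_card]
    refine ⟨hinj, ?_⟩
    rw [Nat.card_prod, Nat.card_zmod, Nat.card_zmod, hcard]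
  exact ⟨_, (baseMap_isCM hn).congr (AddEquiv.ofBijective _ hbij).symm⟩

/-- The elementary abelian group of order `8`. -/
lemma fibrePartition_eight [Fintype L] (h2 : ∀ x : L, 2 • x = 0) (hcard : Nat.card L = 8) :
    FibrePartition L 4 := by
  let _ : Module (ZMod 2) L := AddCommGroup.zmodModule h2
  have : Fact (Nat.Prime 2) := ⟨Nat.prime_two⟩
  have h1 : Fintype.card L = Fintype.card (ZMod 2) ^ Module.finrank (ZMod 2) L :=
    Module.card_eq_pow_finrank
  rw [← Nat.card_eq_fintype_card, hcard, ZMod.card] at h1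
  have hfin : Module.finrank (ZMod 2) L = 3 :=
    (Nat.pow_right_injective (le_refl 2) (show 2 ^ 3 = 2 ^ _ from h1)).symm
  have e : L ≃ₗ[ZMod 2] (ZMod 2 × ZMod 2 × ZMod 2) :=
    LinearEquiv.ofFinrankEq _ _ (by rw [hfin]; simp)
  exact FibrePartition.cube.congr e.toAddEquiv

/-- When `exp L ≥ 4` and `|L| ≥ 4 exp L`, some subgroup of order `exp L` and its quotient both
have at least two involutions. If `2L` has two involutions, take `N` containing them inside a
subgroup of index `4` above `2L`. Otherwise `|2L| ≤ exp L / 2`; adjoining to `2L`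
an involution outside it gives a subgroup that has two involutions and still has index at least
`4`, and the same choice of `N` works above it. -/
lemma exists_subgroup_of_four_le [Finite L] (h : TwoInv L) {η e : ℕ} (hL : Nat.card L = 2 ^ η)
    (hexp : AddMonoid.exponent L = 2 ^ e) (he : 2 ≤ e) (hη : e + 2 ≤ η) :
    ∃ N : AddSubgroup L, Nat.card N = 2 ^ e ∧ TwoInv N ∧ TwoInv (L ⧸ N) := by
  obtain ⟨f, rfl⟩ : ∃ f, e = f + 1 := ⟨e - 1, by omega⟩
  obtain ⟨ζ, rfl⟩ : ∃ ζ, η = ζ + 2 := ⟨η - 2, by omega⟩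
  set D := (dbl L).range with hD
  have hDmem : ∀ g : L, g + g ∈ D := fun g => ⟨g, by simp [two_nsmul]⟩
  have hker : 4 ≤ Nat.card (dbl L).ker := h.four_le
  have hcD : Nat.card (dbl L).ker * Nat.card D = Nat.card L := card_ker_mul_card_range _
  obtain ⟨M, hDM, hM, a, b, haM, hbM, ha, hb, hab, ha2, hb2⟩ : ∃ M : AddSubgroup L, D ≤ M ∧
      4 * Nat.card M ≤ Nat.card L ∧ ∃ a b : L, a ∈ M ∧ b ∈ M ∧ a ≠ 0 ∧ b ≠ 0 ∧ a ≠ b ∧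
        a + a = 0 ∧ b + b = 0 := by
    by_cases hDT : TwoInv D
    · obtain ⟨a, b, ha, hb, hab, ha2, hb2⟩ := hDT
      exact ⟨D, le_rfl, by rw [← hcD]; exact Nat.mul_le_mul_right _ hker, a, b, a.2, b.2,
        by simpa using ha, by simpa using hb, by simpa using hab,
        by simpa [Subtype.ext_iff] using ha2, by simpa [Subtype.ext_iff] using hb2⟩
    · have hDc : Nat.card D ≤ 2 ^ f := by
        refine card_le_of_not_twoInv f hDT ?_
        rintro ⟨_, x, rfl⟩
        apply Subtype.ext
        simp only [nsmulAddMonoidHom_apply, AddSubgroup.coe_nsmul, ZeroMemClass.coe_zero]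
        rw [← mul_nsmul', ← pow_succ, ← hexp]
        exact AddMonoid.exponent_nsmul_eq_zero x
      obtain ⟨x, hx⟩ := exists_addOrderOf (L := L)
      rw [hexp] at hx
      have hz0 : 2 ^ f • x ≠ 0 := fun h0 => by
        have := Nat.le_of_dvd (by positivity) (addOrderOf_dvd_of_nsmul_eq_zero h0)
        rw [hx, pow_succ] at this
        have : 0 < 2 ^ f := by positivity
        omega
      have hz2 : 2 ^ f • x + 2 ^ f • x = 0 := by
        rw [← two_nsmul, ← mul_nsmul', ← pow_succ', ← hx]
        exact addOrderOf_nsmul_eq_zero x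
      have hzD : 2 ^ f • x ∈ D := by
        obtain ⟨k, rfl⟩ : ∃ k, f = k + 1 := ⟨f - 1, by omega⟩
        refine ⟨2 ^ k • x, ?_⟩
        rw [nsmulAddMonoidHom_apply, ← mul_nsmul', ← pow_succ']
      obtain ⟨a, ha0, haz, ha2⟩ : ∃ a : L, a ≠ 0 ∧ a ≠ 2 ^ f • x ∧ a + a = 0 := by
        obtain ⟨a, b, ha, hb, hab, ha2, hb2⟩ := h
        by_cases haz : a = 2 ^ f • x
        · exact ⟨b, hb, fun hbz => hab (haz.trans hbz.symm), hb2⟩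
        · exact ⟨a, ha, haz, ha2⟩
      -- the second involution comes from `2L`, which contains `2 ^ f • x` because `f ≥ 1`
      refine ⟨D ⊔ AddSubgroup.zmultiples a, le_sup_left, ?_, a, 2 ^ f • x,
        AddSubgroup.mem_sup_right (AddSubgroup.mem_zmultiples a), AddSubgroup.mem_sup_left hzD, ha0, hz0, haz, ha2, hz2⟩
      have h1 := card_sup_zmultiples_le D ha2
      have h2 : 2 ^ f * 2 ≤ 2 ^ ζ := by
        rw [← pow_succ]; exact Nat.pow_le_pow_right (by norm_num) (by omega)
      have h3 : (2 : ℕ) ^ (ζ + 2) = 2 ^ ζ * 4 := by rw [pow_add]; norm_num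
      omega
  have h3 : (2 : ℕ) ^ (ζ + 2) = 2 ^ ζ * 4 := by rw [pow_add]; norm_num
  obtain ⟨M', hMM', hM'⟩ := exists_subgroup_ge hL (c := ζ) (by omega) M (by omega)
  have hV : AddSubgroup.zmultiples a ⊔ AddSubgroup.zmultiples b ≤ M' :=
    sup_le ((AddSubgroup.zmultiples_le_of_mem haM).trans hMM')
      ((AddSubgroup.zmultiples_le_of_mem hbM).trans hMM')
  have hVc : Nat.card (AddSubgroup.zmultiples a ⊔ AddSubgroup.zmultiples b : AddSubgroup L)
      ≤ 2 ^ (f + 1) := by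
    have h1 := card_sup_zmultiples_le (AddSubgroup.zmultiples a) hb2
    have h2 : Nat.card (AddSubgroup.zmultiples a) ≤ 2 := by
      rw [Nat.card_zmultiples]
      exact addOrderOf_le_of_nsmul_eq_zero (by norm_num) (by rw [two_nsmul, ha2])
    have h4 : (2 : ℕ) ^ 2 ≤ 2 ^ (f + 1) := Nat.pow_le_pow_right (by norm_num) he
    omega
  obtain ⟨N, hVN, hNM, hN⟩ := exists_subgroup_between hV hM' (c := f + 1) (by omega) hVc
  refine ⟨N, hN, TwoInv.of_subgroup
    (hVN (AddSubgroup.mem_sup_left (AddSubgroup.mem_zmultiples a)))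
    (hVN (AddSubgroup.mem_sup_right (AddSubgroup.mem_zmultiples b))) ha hb hab ha2 hb2, ?_⟩
  exact twoInv_quotient hNM (fun g => hMM' (hDM (hDmem g))) (by omega)

lemma twoInv_of_elementary [Finite L] (h2 : ∀ x : L, x + x = 0) (hcard : 2 < Nat.card L) :
    TwoInv L := by
  apply twoInv_of_card
  have : (dbl L).ker = ⊤ := by
    ext x; simp [two_nsmul, h2]
  rwa [this, AddSubgroup.card_top]

lemma exists_subgroup_of_elementary [Finite L] {η : ℕ} (hL : Nat.card L = 2 ^ η)
    (h2 : ∀ x : L, x + x = 0) (hη : 4 ≤ η) :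
    ∃ N : AddSubgroup L, Nat.card N = 4 ∧ TwoInv N ∧ TwoInv (L ⧸ N) := by
  obtain ⟨N, -, hN⟩ := exists_subgroup_ge hL (c := 2) (by omega) ⊥ (by simp)
  have h16 : (2 : ℕ) ^ 4 ≤ 2 ^ η := Nat.pow_le_pow_right (by norm_num) hη
  have h3 := AddSubgroup.card_eq_card_quotient_mul_card_addSubgroup N
  refine ⟨N, hN, twoInv_of_elementary (fun x => Subtype.ext (h2 x)) (by omega),
    twoInv_of_elementary (fun q => ?_) (by rw [hN] at h3; omega)⟩
  obtain ⟨g, rfl⟩ := QuotientAddGroup.mk_surjective q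
  rw [← QuotientAddGroup.mk_add, h2, QuotientAddGroup.mk_zero]

/-- The three possible shapes of a noncyclic abelian 2-group. -/
lemma TwoInv.trichotomy [Finite L] (h : TwoInv L) {η : ℕ} (hL : Nat.card L = 2 ^ η) :
    (∃ n, 0 < n ∧ AddMonoid.exponent L = 2 * n ∧ Nat.card L = 2 * n * 2) ∨
    (AddMonoid.exponent L = 2 ∧ (∀ x : L, 2 • x = 0) ∧ Nat.card L = 8) ∨
    (2 * AddMonoid.exponent L ≠ Nat.card L ∧
      ∃ N : AddSubgroup L, Nat.card N = max 4 (AddMonoid.exponent L) ∧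
      (∀ g : L, Nat.card N • g = 0) ∧ TwoInv N ∧ TwoInv (L ⧸ N)) := by
  obtain ⟨e, -, he⟩ := (Nat.dvd_prime_pow Nat.prime_two).1
    (hL ▸ AddGroup.exponent_dvd_nat_card (G := L))
  have hz : ∀ x : L, 2 ^ e • x = 0 := fun x => he ▸ AddMonoid.exponent_nsmul_eq_zero x
  have hlt := h.exponent_lt
  rw [hL, he] at hlt
  have hlt' : e < η := (Nat.pow_lt_pow_iff_right (by norm_num)).1 hlt
  have he0 : e ≠ 0 := by
    rintro rfl
    obtain ⟨a, b, ha, -⟩ := h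
    exact ha (by simpa using hz a)
  by_cases h1 : η = e + 1
  · left
    obtain ⟨f, rfl⟩ : ∃ f, e = f + 1 := ⟨e - 1, by omega⟩
    exact ⟨2 ^ f, by positivity, by rw [he, pow_succ'], by rw [hL, h1, pow_succ, pow_succ']⟩
  right
  have hne : 2 * AddMonoid.exponent L ≠ Nat.card L := by
    rw [he, hL, ← pow_succ']
    exact fun h => h1 (Nat.pow_right_injective le_rfl h).symm
  rcases Nat.lt_or_ge e 2 with he2 | he2
  · obtain rfl : e = 1 := by omega
    rw [pow_one] at hz he
    by_cases h3 : η = 3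
    · left
      exact ⟨he, hz, by rw [hL, h3]; norm_num⟩
    · right
      obtain ⟨N, hN, hN1, hN2⟩ := exists_subgroup_of_elementary hL
        (fun x => by rw [← two_nsmul, hz]) (by omega)
      refine ⟨hne, N, by rw [hN, he]; norm_num, fun g => ?_, hN1, hN2⟩
      rw [hN, show 4 = 2 * 2 from rfl, mul_nsmul, hz]
  · right
    obtain ⟨N, hN, hN1, hN2⟩ := exists_subgroup_of_four_le h hL he he2 (by omega)
    refine ⟨hne, N, ?_, fun g => by rw [hN, hz], hN1, hN2⟩
    have h4 : (2 : ℕ) ^ 2 ≤ 2 ^ e := Nat.pow_le_pow_right (by norm_num) he2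
    rw [hN, he]; omega

/-- Every noncyclic abelian 2-group has a complete mapping. -/
lemma TwoInv.exists_isCM (η : ℕ) : ∀ {L : Type*} [AddCommGroup L] [Finite L],
    TwoInv L → Nat.card L = 2 ^ η → ∃ φ : L → L, IsCM φ := by
  induction η using Nat.strong_induction_on with
  | _ η ih =>
    intro L _ _ h hL
    have := Fintype.ofFinite L
    rcases h.trichotomy hL with ⟨n, hn, hexp, hcard⟩ | ⟨-, h2, hcard⟩ | ⟨-, N, -, -, hN, hQ⟩
    · exact exists_isCM_of_index_two h hn hexp hcard
    · obtain ⟨φ, hφ, -⟩ := fibrePartition_eight h2 hcard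
      exact ⟨φ, hφ⟩
    · have hmul := AddSubgroup.card_eq_card_quotient_mul_card_addSubgroup N
      rw [hL] at hmul
      obtain ⟨a, ha, haN⟩ := (Nat.dvd_prime_pow Nat.prime_two).1 (Dvd.intro_left _ hmul.symm)
      obtain ⟨b, hb, hbQ⟩ := (Nat.dvd_prime_pow Nat.prime_two).1 (Dvd.intro _ hmul.symm)
      have hN1 : a ≠ 0 := by
        rintro rfl
        have := hN.exponent_lt
        have := AddMonoid.exponent_pos.2 (AddMonoid.ExponentExists.of_finite (G := N))
        omega
      have hQ1 : b ≠ 0 := by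
        rintro rfl
        have := hQ.exponent_lt
        have := AddMonoid.exponent_pos.2 (AddMonoid.ExponentExists.of_finite (G := L ⧸ N))
        omega
      have hab : η = b + a := by
        rw [haN, hbQ, ← pow_add] at hmul
        exact Nat.pow_right_injective le_rfl hmul
      obtain ⟨φN, hφN⟩ := ih a (by omega) hN haN
      obtain ⟨φQ, hφQ⟩ := ih b (by omega) hQ hbQ
      exact ⟨_, extMap_isCM hφQ hφN⟩

lemma TwoInv.fibrePartition [Fintype L] (h : TwoInv L) {η : ℕ} (hL : Nat.card L = 2 ^ η) {l : ℕ}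
    (hl : l = if AddMonoid.exponent L = Nat.card L / 2 then 2 * AddMonoid.exponent L
      else max 4 (AddMonoid.exponent L)) : FibrePartition L l := by
  obtain ⟨φ, hφ⟩ := TwoInv.exists_isCM η h hL
  rcases h.trichotomy hL with ⟨n, hn, hexp, hcard⟩ | ⟨hexp, h2, hcard⟩ | ⟨hne, N, hc, hz, hN, hQ⟩
  · rw [if_pos (by rw [hexp, hcard]; omega)] at hl
    have : l = Fintype.card L := by rw [← Nat.card_eq_fintype_card, hl, hexp, hcard]; ring
    rw [this]
    exact FibrePartition.whole hφ
  · rw [hexp, hcard] at hl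
    norm_num at hl
    rw [hl]
    exact fibrePartition_eight h2 hcard
  · have hmul := AddSubgroup.card_eq_card_quotient_mul_card_addSubgroup N
    rw [hL] at hmul
    obtain ⟨a, ha, haN⟩ := (Nat.dvd_prime_pow Nat.prime_two).1 (Dvd.intro_left _ hmul.symm)
    obtain ⟨b, hb, hbQ⟩ := (Nat.dvd_prime_pow Nat.prime_two).1 (Dvd.intro _ hmul.symm)
    obtain ⟨φN, hφN⟩ := TwoInv.exists_isCM a hN haN
    obtain ⟨φQ, hφQ⟩ := TwoInv.exists_isCM b hQ hbQ
    have hη : η ≠ 0 := by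
      rintro rfl
      have := h.exponent_lt
      have := AddMonoid.exponent_pos.2 (AddMonoid.ExponentExists.of_finite (G := L))
      omega
    obtain ⟨ζ, rfl⟩ : ∃ ζ, η = ζ + 1 := ⟨η - 1, by omega⟩
    rw [if_neg (fun hh => hne (by rw [hh, hL, pow_succ]; omega)), ← hc] at hl
    rw [hl]
    exact FibrePartition.ext hφQ hφN hz

end TwoGroups

/-! ### Adding the odd part -/

/-- The sum over a block of `L × H` as an iterated sum over a block of `L` and the transported
block of `H`. -/
lemma sum_block {L H A : Type*} [Fintype L] [Fintype H] [AddCommMonoid A] {r k s : ℕ}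
    (p : L → Fin r) (eH : H ≃ Fin k × Fin s) (sg : L → H → H) (hsg : ∀ t h, sg t (sg t h) = h)
    (F : L × H → A) (i : Fin r) (j : Fin s) :
    ∑ x with (p x.1, (eH (sg x.1 x.2)).2) = (i, j), F x
      = ∑ t with p t = i, ∑ a : Fin k, F (t, sg t (eH.symm (a, j))) := by
  rw [Finset.sum_sigma']
  symm
  refine Finset.sum_bij (fun x _ => (x.1, sg x.1 (eH.symm (x.2, j)))) ?_ ?_ ?_ ?_
  · rintro ⟨t, a⟩ hx
    simpa [hsg] using hx
  · rintro ⟨t, a⟩ - ⟨t', a'⟩ - hx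
    simp only [Prod.mk.injEq] at hx
    obtain ⟨rfl, hx⟩ := hx
    have := eH.symm.injective ((Function.Involutive.injective (hsg t)) hx)
    simp_all
  · rintro ⟨t, h⟩ hx
    simp only [Finset.mem_filter, Finset.mem_univ, true_and, Prod.mk.injEq] at hx
    refine ⟨⟨t, (eH (sg t h)).1⟩, by simpa using hx.1, ?_⟩
    have : ((eH (sg t h)).1, j) = eH (sg t h) := by rw [← hx.2]
    simp only [this, Equiv.symm_apply_apply, hsg]
  · intro x _
    rfl

/-- Half of each (even) block of `L` carries the blocks `A` of an arbitrary equipartition of `H`,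
the other half carries `-A`, so that the `H`-components cancel. The complete mapping is the given
one on `L` and the identity on `H`, where doubling is bijective because `|H|` is odd. -/
lemma FibrePartition.prod_odd {L H : Type*} [AddCommGroup L] [Fintype L] [AddCommGroup H]
    [Fintype H] (hH : Odd (Fintype.card H)) {l k : ℕ} (hl : Even l) (hk : k ∣ Fintype.card H)
    (h : FibrePartition L l) : FibrePartition (L × H) (k * l) := by
  classical
  obtain ⟨φ, hφ, r, p, hp⟩ := h
  obtain ⟨d, rfl⟩ := hl
  obtain ⟨s, hs⟩ := hk
  have eH : H ≃ Fin k × Fin s := (Fintype.equivFinOfCardEq hs).trans finProdFinEquiv.symm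
  -- the half of the block `i` that carries the sign `+`
  have hU : ∀ i, ∃ U ⊆ Finset.univ.filter (fun x => p x = i), U.card = d := fun i =>
    Finset.exists_subset_card_eq (by rw [(hp i).1]; omega)
  choose U hUs hUc using hU
  let sg : L → H → H := fun t h => if t ∈ U (p t) then h else -h
  have hsg : ∀ t h, sg t (sg t h) = h := fun t h => by
    simp only [sg]; split_ifs <;> simp
  have hdbl : Function.Injective fun h : H => h + h := by
    intro a b hab
    have h2 : 2 • (a - b) = 0 := by
      rw [two_nsmul]; simp only at hab; rw [sub_add_sub_comm, hab, sub_self]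
    have h3 := addOrderOf_dvd_of_nsmul_eq_zero h2
    have h4 : addOrderOf (a - b) ∣ Fintype.card H := addOrderOf_dvd_card
    have h5 : addOrderOf (a - b) ∣ 1 :=
      (Nat.Coprime.symm hH.coprime_two_right : Nat.Coprime 2 _) ▸ Nat.dvd_gcd h3 h4
    exact sub_eq_zero.1 (AddMonoid.addOrderOf_eq_one_iff.1 (Nat.dvd_one.1 h5))
  have hφ' : IsCM (fun x : L × H => (φ x.1, x.2)) :=
    ⟨hφ.1.prodMap Function.bijective_id,
      hφ.2.prodMap (Finite.injective_iff_bijective.1 hdbl)⟩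
  have hsum1 := @sum_block L H L _ _ _ r k s p eH sg hsg
  have hsum2 := @sum_block L H H _ _ _ r k s p eH sg hsg
  have hcancel : ∀ i j, ∑ t with p t = i, ∑ a : Fin k, sg t (eH.symm (a, j)) = 0 := by
    intro i j
    set σ := ∑ a : Fin k, eH.symm (a, j) with hσ
    have h1 : ∀ t ∈ Finset.univ.filter (fun x => p x = i),
        ∑ a : Fin k, sg t (eH.symm (a, j)) = if t ∈ U i then σ else -σ := by
      intro t ht
      have : p t = i := (Finset.mem_filter.1 ht).2
      simp only [sg, this]
      split_ifs
      · rfl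
      · rw [Finset.sum_neg_distrib]
    have hc : (Finset.univ.filter (fun x => p x = i) \ U i).card = d := by
      rw [Finset.card_sdiff_of_subset (hUs i), (hp i).1, hUc]; omega
    rw [Finset.sum_congr rfl h1, ← Finset.sum_sdiff (hUs i),
      Finset.sum_congr rfl (fun t ht => if_neg (Finset.mem_sdiff.1 ht).2),
      Finset.sum_congr rfl (fun t ht => if_pos ht), Finset.sum_const, Finset.sum_const, hc, hUc]
    simp
  refine FibrePartition.of_map hφ' (fun x => (p x.1, (eH (sg x.1 x.2)).2)) ?_
  rintro ⟨i, j⟩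
  refine ⟨?_, ?_, ?_⟩
  · rw [Finset.card_eq_sum_ones, sum_block p eH sg hsg]
    simp [(hp i).1, mul_comm]
  · ext
    · rw [Prod.fst_sum, hsum1]
      simp only [Finset.sum_const, Finset.card_univ, Fintype.card_fin, Prod.fst_zero]
      rw [← Finset.smul_sum, (hp i).2.1, smul_zero]
    · rw [Prod.snd_sum, hsum2]
      exact hcancel i j
  · ext
    · rw [Prod.fst_sum, hsum1]
      simp only [Finset.sum_const, Finset.card_univ, Fintype.card_fin, Prod.fst_zero]
      rw [← Finset.smul_sum, (hp i).2.2, smul_zero]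
    · rw [Prod.snd_sum, hsum2]
      exact hcancel i j

theorem stmt3 {Γ L H : Type*} [AddCommGroup Γ] [Fintype Γ]
    [AddCommGroup L] [Fintype L] [AddCommGroup H] [Fintype H]
    (e : Γ ≃+ L × H) (hG : InClassG Γ)
    (hH : Odd (Fintype.card H)) (η : ℕ) (hη : 2 ≤ η) (hL : Fintype.card L = 2 ^ η)
    (hLinv : 1 < Nat.card {g : L // g ≠ 0 ∧ g + g = 0})
    (l k m : ℕ)
    (hl : l = if AddMonoid.exponent L = Fintype.card L / 2 then 2 * AddMonoid.exponent L
          else max 4 (AddMonoid.exponent L))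
    (hk : 1 < k) (hkH : k ∣ Fintype.card H) (hm : m = k * l) :
    HasZeroSumCMPartition Γ m := by
  have hL' : Nat.card L = 2 ^ η := by rw [Nat.card_eq_fintype_card, hL]
  have hT : TwoInv L := by
    have := Finite.one_lt_card_iff_nontrivial.1 hLinv
    obtain ⟨⟨a, ha, ha2⟩, ⟨b, hb, hb2⟩, hab⟩ := this
    exact ⟨a, b, ha, hb, fun h => hab (Subtype.ext h), ha2, hb2⟩
  rw [← Nat.card_eq_fintype_card] at hl
  have hFP := hT.fibrePartition hL' hl
  have heven : Even l := by
    obtain ⟨e, -, he⟩ := (Nat.dvd_prime_pow Nat.prime_two).1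
      (hL' ▸ AddGroup.exponent_dvd_nat_card (G := L))
    have h2 : 2 ∣ AddMonoid.exponent L := by
      rw [he]
      refine dvd_pow_self 2 ?_
      rintro rfl
      obtain ⟨a, -, ha, -⟩ := hT
      have := AddMonoid.exponent_nsmul_eq_zero a
      rw [he] at this
      exact ha (by simpa using this)
    rw [even_iff_two_dvd, hl]
    split_ifs
    · exact Dvd.intro _ rfl
    · rcases max_choice 4 (AddMonoid.exponent L) with h | h <;> rw [h]
      · norm_num
      · exact h2
  rw [hm]
  exact ((hFP.prod_odd hH heven hkH).congr e).hasZeroSum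
end

section
/- Let Γ ≅ ℤ_3 ⊕ Δ, where Δ is a finite Abelian group of order 2^α with α ≥ 2, Δ has more than one involution, and exp(Δ) ≤ 4. Then there exists a Γ-magic rectangle set MRS_Γ(3, 4; 2^{α−2}). -/
/-!
Write `Γ = ℤ₃ ⊕ Δ`. All row and column sums can be taken to be zero, and this is what allows an
induction along non-split extensions. If the elements of `Q = G ⧸ H` are arranged in `3 × 4` arrays
with zero sums, every array lifts to an array over `G` with zero sums: six of its entries are free,
the others are forced, and the corner is consistent because all sums vanish. If `H` is a Klein
four-group and `φ` is an automorphism of `H` of order three, so `1 + φ + φ² = 0`, then adding `φ^i h`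
to the `i`-th row of the lifted array keeps all sums zero, as `4h = 0`. Letting `h` run through `H`
covers every element of `G` once (`ZeroRectangles.of_extension`).

A group `Δ` of order `2^α`, `α ≥ 4`, with `4Δ = 0` has a Klein four subgroup `H`, and the quotient
satisfies the same hypotheses. Only for `α = 4` could it be `ℤ₄`, which has no solution; there `H` is
taken between `2Δ` and the group of elements killed by `2` (`exists_klein_addSubgroup`). The
induction ends at `Δ = ℤ₂²`, `ℤ₄ ⊕ ℤ₂` or `ℤ₂³`, where explicit arrays are given.
-/


/-- A `Γ`-magic rectangle set `MRS_Γ(a, b; c)`. -/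
def IsMagicRectangleSet (Γ : Type*) [AddCommGroup Γ] [Fintype Γ] (a b c : ℕ) : Prop :=
  ∃ (x : Fin c × Fin a × Fin b → Γ) (ω δ : Γ),
    Function.Bijective x ∧
    (∀ (s : Fin c) (i : Fin a), ∑ j : Fin b, x (s, i, j) = ω) ∧
    (∀ (s : Fin c) (j : Fin b), ∑ i : Fin a, x (s, i, j) = δ)

/-! ### Rectangle families with vanishing sums -/

/-- `ZeroRectangles G`: for some index type `S`, the elements of `G` can be arranged, each exactly
once, in a family of `3 × 4` arrays indexed by `S` whose row sums and column sums all vanish. -/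
def ZeroRectangles (G : Type*) [AddCommGroup G] : Prop :=
  ∃ (S : Type) (x : S × Fin 3 × Fin 4 → G),
    Function.Bijective x ∧
    (∀ (s : S) (i : Fin 3), ∑ j : Fin 4, x (s, i, j) = 0) ∧
    (∀ (s : S) (j : Fin 4), ∑ i : Fin 3, x (s, i, j) = 0)

lemma ZeroRectangles.of_addEquiv {G G' : Type*} [AddCommGroup G] [AddCommGroup G']
    (e : G ≃+ G') (h : ZeroRectangles G) : ZeroRectangles G' := by
  obtain ⟨S, x, hb, hr, hc⟩ := h
  refine ⟨S, e ∘ x, e.bijective.comp hb, fun s i => ?_, fun s j => ?_⟩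
  · simp only [Function.comp, ← map_sum, hr, map_zero]
  · simp only [Function.comp, ← map_sum, hc, map_zero]

/-! ### Lifting along an extension by the Klein four-group -/

/-- The six entries in the first two rows and first three columns may be lifted arbitrarily; the
vanishing of the sums then determines all others, and the two conditions on the corner agree. -/
lemma exists_zero_sum_lift {G Q : Type*} [AddCommGroup G] [AddCommGroup Q] (f : G →+ Q)
    (hf : Function.Surjective f) (m : Fin 3 → Fin 4 → Q)
    (hr : ∀ i, ∑ j, m i j = 0) (hc : ∀ j, ∑ i, m i j = 0) :
    ∃ y : Fin 3 → Fin 4 → G, (∀ i j, f (y i j) = m i j) ∧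
      (∀ i, ∑ j, y i j = 0) ∧ (∀ j, ∑ i, y i j = 0) := by
  choose r h using fun i j => hf (m i j)
  refine ⟨![![r 0 0, r 0 1, r 0 2, -(r 0 0 + r 0 1 + r 0 2)],
    ![r 1 0, r 1 1, r 1 2, -(r 1 0 + r 1 1 + r 1 2)],
    ![-(r 0 0 + r 1 0), -(r 0 1 + r 1 1), -(r 0 2 + r 1 2),
      r 0 0 + r 0 1 + r 0 2 + (r 1 0 + r 1 1 + r 1 2)]], ?_, ?_, ?_⟩
  · have hr0 := hr 0
    have hr1 := hr 1
    have hc0 := hc 0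
    have hc1 := hc 1
    have hc2 := hc 2
    have hc3 := hc 3
    simp only [Fin.sum_univ_four, Fin.sum_univ_three] at hr0 hr1 hc0 hc1 hc2 hc3
    intro i j
    fin_cases i <;> fin_cases j <;> simp [h] <;> grind
  · intro i
    fin_cases i <;> (simp [Fin.sum_univ_four]; try abel)
  · intro j
    fin_cases j <;> (simp [Fin.sum_univ_three]; try abel)

/-- The powers `1, φ, φ²` of an automorphism `φ` of order three of the Klein four-group. They are
bijections with `1 + φ + φ² = 0`. -/
def kleinTwist : Fin 3 → ZMod 2 × ZMod 2 → ZMod 2 × ZMod 2 :=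
  ![id, fun p => (p.2, p.1 + p.2), fun p => (p.1 + p.2, p.1)]

lemma kleinTwist_bijective (i : Fin 3) : Function.Bijective (kleinTwist i) := by
  revert i; decide

lemma sum_kleinTwist (h : ZMod 2 × ZMod 2) : ∑ i, kleinTwist i h = 0 := by
  revert h; decide

lemma four_nsmul_klein (h : ZMod 2 × ZMod 2) : 4 • h = 0 := by
  revert h; decide

/-- Zero-sum rectangles lift along an extension with Klein four kernel: a zero-sum lift of each
rectangle is translated by the four arrays whose `i`-th row is constantly `φ^i h`. These arrays
have zero sums and, in each cell, run exactly once through the kernel. -/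
lemma ZeroRectangles.of_extension {G Q : Type*} [AddCommGroup G] [AddCommGroup Q] (f : G →+ Q)
    (hf : Function.Surjective f) (ι : ZMod 2 × ZMod 2 →+ G) (hι : Function.Injective ι)
    (hex : ∀ g, f g = 0 ↔ ∃ k, ι k = g) (h : ZeroRectangles Q) : ZeroRectangles G := by
  obtain ⟨S, x, hb, hr, hc⟩ := h
  choose y hy hyr hyc using fun s : S =>
    exists_zero_sum_lift f hf (fun i j => x (s, i, j)) (hr s) (hc s)
  have hfι : ∀ k, f (ι k) = 0 := fun k => (hex _).2 ⟨k, rfl⟩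
  refine ⟨S × (ZMod 2 × ZMod 2),
    fun p => y p.1.1 p.2.1 p.2.2 + ι (kleinTwist p.2.1 p.1.2), ⟨?_, ?_⟩, ?_, ?_⟩
  · rintro ⟨⟨s, k⟩, i, j⟩ ⟨⟨s', k'⟩, i', j'⟩ hp
    have h1 := congrArg f hp
    simp only [map_add, hfι, hy, add_zero] at h1
    have h2 := hb.1 h1
    simp only [Prod.mk.injEq] at h2
    obtain ⟨rfl, rfl, rfl⟩ := h2
    have h3 := (kleinTwist_bijective i).1 (hι (add_left_cancel hp))
    simp only at h3
    rw [h3]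
  · intro g
    obtain ⟨⟨s, i, j⟩, h1⟩ := hb.2 (f g)
    obtain ⟨k, hk⟩ := (hex (g - y s i j)).1 (by rw [map_sub, hy, h1, sub_self])
    obtain ⟨l, rfl⟩ := (kleinTwist_bijective i).2 k
    exact ⟨((s, l), i, j), by simp [hk]⟩
  · rintro ⟨s, k⟩ i
    simp only [Finset.sum_add_distrib, hyr, zero_add, Finset.sum_const, Finset.card_univ,
      Fintype.card_fin, ← map_nsmul, four_nsmul_klein, map_zero]
  · rintro ⟨s, k⟩ j
    simp only [Finset.sum_add_distrib, hyc, zero_add, ← map_sum, sum_kleinTwist, map_zero]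

lemma isAddKleinFour_of_two_torsion {H : Type*} [AddCommGroup H] (hcard : Nat.card H = 4)
    (h2 : ∀ h : H, 2 • h = 0) : IsAddKleinFour H := by
  refine ⟨hcard, ?_⟩
  have hd : AddMonoid.exponent H ∣ 2 := AddMonoid.exponent_dvd_of_forall_nsmul_eq_zero h2
  rcases (Nat.dvd_prime Nat.prime_two).1 hd with h1 | h1
  · have := AddMonoid.exp_eq_one_iff.1 h1
    rw [Nat.card_of_subsingleton (0 : H)] at hcard
    omega
  · exact h1

lemma ZeroRectangles.of_quotient {Δ : Type*} [AddCommGroup Δ] (H : AddSubgroup Δ)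
    (hcard : Nat.card H = 4) (h2 : ∀ h ∈ H, 2 • h = 0)
    (h : ZeroRectangles (ZMod 3 × (Δ ⧸ H))) : ZeroRectangles (ZMod 3 × Δ) := by
  have := isAddKleinFour_of_two_torsion hcard (fun h => Subtype.ext (h2 h.1 h.2))
  obtain ⟨e⟩ := IsAddKleinFour.nonempty_addEquiv (G₁ := ZMod 2 × ZMod 2) (G₂ := H)
  refine .of_extension ((AddMonoidHom.id (ZMod 3)).prodMap (QuotientAddGroup.mk' H))
    (Function.surjective_id.prodMap (QuotientAddGroup.mk'_surjective H))
    ((AddMonoidHom.inr (ZMod 3) Δ).comp (H.subtype.comp e.toAddMonoidHom)) ?_ ?_ h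
  · intro a b hab
    simpa using hab
  · rintro ⟨a, d⟩
    simp only [AddMonoidHom.prodMap_def, AddMonoidHom.prod_apply, AddMonoidHom.comp_apply,
      AddMonoidHom.coe_fst, AddMonoidHom.coe_snd, AddMonoidHom.id_apply, Prod.mk_eq_zero,
      QuotientAddGroup.mk'_apply, QuotientAddGroup.eq_zero_iff, AddMonoidHom.inr_apply,
      Prod.mk.injEq]
    constructor
    · rintro ⟨rfl, hd⟩
      exact ⟨e.symm ⟨d, hd⟩, by simp⟩
    · rintro ⟨k, h0, rfl⟩
      exact ⟨h0.symm, by simp⟩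

/-! ### The groups of order four and eight -/

lemma zeroRectangles_two_two : ZeroRectangles (ZMod 3 × ZMod 2 × ZMod 2) := by
  refine ⟨Fin 1, fun p => (![![![(2, 0, 0), (0, 0, 1), (2, 1, 1), (2, 1, 0)],
   ![(0, 1, 0), (1, 0, 0), (1, 1, 1), (1, 0, 1)],
   ![(1, 1, 0), (2, 0, 1), (0, 0, 0), (0, 1, 1)]]] :
    Fin 1 → Fin 3 → Fin 4 → ZMod 3 × ZMod 2 × ZMod 2) p.1 p.2.1 p.2.2, ?_, ?_, ?_⟩
  · rw [Fintype.bijective_iff_surjective_and_card]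
    exact ⟨by decide, by simp⟩
  · decide
  · decide

lemma zeroRectangles_four_two : ZeroRectangles (ZMod 3 × ZMod 4 × ZMod 2) := by
  refine ⟨Fin 2, fun p => (![![![(1, 2, 1), (1, 3, 0), (2, 0, 1), (2, 3, 0)],
   ![(2, 1, 0), (0, 2, 1), (0, 0, 0), (1, 1, 1)],
   ![(0, 1, 1), (2, 3, 1), (1, 0, 1), (0, 0, 1)]],
   ![![(0, 3, 0), (2, 0, 0), (0, 1, 0), (1, 0, 0)],
   ![(1, 3, 1), (1, 2, 0), (2, 2, 0), (2, 1, 1)],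
   ![(2, 2, 1), (0, 2, 0), (1, 1, 0), (0, 3, 1)]]] :
    Fin 2 → Fin 3 → Fin 4 → ZMod 3 × ZMod 4 × ZMod 2) p.1 p.2.1 p.2.2, ?_, ?_, ?_⟩
  · rw [Fintype.bijective_iff_surjective_and_card]
    exact ⟨by decide, by simp⟩
  · decide
  · decide

lemma zeroRectangles_two_two_two : ZeroRectangles (ZMod 3 × ZMod 2 × ZMod 2 × ZMod 2) := by
  refine ⟨Fin 2, fun p => (![![![(1, 1, 0, 0), (1, 0, 1, 0), (2, 1, 1, 1), (2, 0, 0, 1)],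
   ![(1, 1, 0, 1), (0, 0, 1, 0), (0, 1, 0, 0), (2, 0, 1, 1)],
   ![(1, 0, 0, 1), (2, 0, 0, 0), (1, 0, 1, 1), (2, 0, 1, 0)]],
   ![![(1, 1, 1, 0), (1, 1, 1, 1), (0, 0, 0, 1), (1, 0, 0, 0)],
   ![(2, 1, 1, 0), (2, 1, 0, 0), (0, 1, 1, 1), (2, 1, 0, 1)],
   ![(0, 0, 0, 0), (0, 0, 1, 1), (0, 1, 1, 0), (0, 1, 0, 1)]]] :
    Fin 2 → Fin 3 → Fin 4 → ZMod 3 × ZMod 2 × ZMod 2 × ZMod 2) p.1 p.2.1 p.2.2, ?_, ?_, ?_⟩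
  · rw [Fintype.bijective_iff_surjective_and_card]
    exact ⟨by decide, by simp⟩
  · decide
  · decide

/-! ### Abelian groups of exponent dividing four -/

lemma card_range_mul_card_ker_two {Δ : Type*} [AddCommGroup Δ] :
    Nat.card (nsmulAddMonoidHom (α := Δ) 2).range * Nat.card (nsmulAddMonoidHom (α := Δ) 2).ker
      = Nat.card Δ := by
  rw [AddSubgroup.card_eq_card_quotient_mul_card_addSubgroup (nsmulAddMonoidHom (α := Δ) 2).ker,
    Nat.card_congr (QuotientAddGroup.quotientKerEquivRange (nsmulAddMonoidHom (α := Δ) 2)).toEquiv]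

lemma range_le_ker_two {Δ : Type*} [AddCommGroup Δ] (h4 : ∀ d : Δ, 4 • d = 0) :
    (nsmulAddMonoidHom (α := Δ) 2).range ≤ (nsmulAddMonoidHom (α := Δ) 2).ker := by
  rintro _ ⟨d, rfl⟩
  simpa [AddMonoidHom.mem_ker, smul_smul] using h4 d

lemma exists_addSubgroup_between {A : Type*} [AddCommGroup A] [Finite A] (H : AddSubgroup A)
    {k m : ℕ} (hH : Nat.card H = 2 ^ k) (hkm : k ≤ m) (hA : 2 ^ m ∣ Nat.card A) :
    ∃ K : AddSubgroup A, Nat.card K = 2 ^ m ∧ H ≤ K := by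
  obtain ⟨K, hK, hle⟩ := Sylow.exists_subgroup_card_pow_prime_le (G := Multiplicative A) 2 hA
    (AddSubgroup.toSubgroup H) hH hkm
  exact ⟨AddSubgroup.toSubgroup.symm K, hK, fun a ha => hle ha⟩

/-- A group of exponent dividing four and order at least `16` has a Klein four subgroup `H`; for
order `16` it can be chosen to contain all doubles, so that the quotient is again a Klein four-group
and not cyclic. -/
lemma exists_klein_addSubgroup {Δ : Type*} [AddCommGroup Δ] [Finite Δ] (h4 : ∀ d : Δ, 4 • d = 0)
    {α : ℕ} (hα : 4 ≤ α) (hcard : Nat.card Δ = 2 ^ α) :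
    ∃ H : AddSubgroup Δ, Nat.card H = 4 ∧ (∀ h ∈ H, 2 • h = 0) ∧
      (α = 4 → ∀ d : Δ, 2 • d ∈ H) := by
  set Ω := (nsmulAddMonoidHom (α := Δ) 2).ker with hΩ
  set D := (nsmulAddMonoidHom (α := Δ) 2).range with hD
  have hDΩ : D ≤ Ω := range_le_ker_two h4
  have hmul : Nat.card D * Nat.card Ω = 2 ^ α := card_range_mul_card_ker_two.trans hcard
  obtain ⟨k, -, hk⟩ := (Nat.dvd_prime_pow Nat.prime_two).1 (Dvd.intro _ hmul)
  obtain ⟨l, -, hl⟩ := (Nat.dvd_prime_pow Nat.prime_two).1 (Dvd.intro_left _ hmul)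
  have hkl : k + l = α := by
    rw [hk, hl, ← pow_add] at hmul
    exact Nat.pow_right_injective le_rfl hmul
  have hle : k ≤ l := by
    have := AddSubgroup.card_le_of_le hDΩ
    rw [hk, hl] at this
    exact (Nat.pow_le_pow_iff_right (by norm_num)).1 this
  have hΩ4 : 2 ^ 2 ∣ Nat.card Ω := hl ▸ pow_dvd_pow 2 (by omega)
  have key : ∃ K : AddSubgroup Ω, Nat.card K = 2 ^ 2 ∧ (α = 4 → D.addSubgroupOf Ω ≤ K) := by
    by_cases h : α = 4
    · obtain ⟨K, h1, h2⟩ := exists_addSubgroup_between (D.addSubgroupOf Ω) (k := k) (m := 2)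
        (by rw [← hk]; exact Nat.card_congr (AddSubgroup.addSubgroupOfEquivOfLe hDΩ).toEquiv)
        (by omega) hΩ4
      exact ⟨K, h1, fun _ => h2⟩
    · obtain ⟨K, h1, -⟩ := exists_addSubgroup_between (⊥ : AddSubgroup Ω) (k := 0) (m := 2)
        (by simp) (by omega) hΩ4
      exact ⟨K, h1, fun h' => absurd h' h⟩
  obtain ⟨K, hK, hDK⟩ := key
  refine ⟨K.map Ω.subtype, ?_, ?_, fun h d => ?_⟩
  · rw [AddSubgroup.card_map_of_injective Ω.subtype_injective, hK]; rfl
  · rintro _ ⟨a, -, rfl⟩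
    exact a.2
  · have hd : 2 • d ∈ D := ⟨d, rfl⟩
    exact ⟨⟨2 • d, hDΩ hd⟩, hDK h hd, rfl⟩

/-- A group of order eight and exponent dividing four is `ℤ₂³` or `ℤ₄ ⊕ ℤ₂`. -/
lemma zeroRectangles_of_card_eight {Δ : Type*} [AddCommGroup Δ] [Finite Δ]
    (h4 : ∀ d : Δ, 4 • d = 0) (hcard : Nat.card Δ = 8) : ZeroRectangles (ZMod 3 × Δ) := by
  by_cases h2 : ∀ d : Δ, 2 • d = 0
  · let : Module (ZMod 2) Δ := AddCommGroup.zmodModule h2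
    have hfr : Module.finrank (ZMod 2) Δ = 3 := by
      have := Module.natCard_eq_pow_finrank (K := ZMod 2) (V := Δ)
      rw [hcard, Nat.card_zmod, show 8 = 2 ^ 3 from rfl] at this
      exact (Nat.pow_right_injective le_rfl this).symm
    have e : (ZMod 2 × ZMod 2 × ZMod 2) ≃ₗ[ZMod 2] Δ :=
      LinearEquiv.ofFinrankEq _ _ (by simp [hfr])
    exact zeroRectangles_two_two_two.of_addEquiv
      ((AddEquiv.refl (ZMod 3)).prodCongr e.toAddEquiv)
  · push Not at h2
    obtain ⟨x, hx⟩ := h2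
    obtain ⟨y, hy2, hy0, hyx⟩ : ∃ y : Δ, 2 • y = 0 ∧ y ≠ 0 ∧ y ≠ 2 • x := by
      by_contra! hcon
      set Ω := (nsmulAddMonoidHom (α := Δ) 2).ker with hΩ
      have hmul := card_range_mul_card_ker_two (Δ := Δ)
      have hle := AddSubgroup.card_le_of_le (range_le_ker_two h4)
      -- Otherwise the kernel of doubling lies in `{0, 2x}`; as it contains the image, `|Δ| ≤ 4`.
      have hΩ2 : Nat.card Ω ≤ 2 := by
        classical
        have hsub : (Ω : Set Δ) ⊆ ({0, 2 • x} : Finset Δ) := by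
          intro y hy
          by_cases h0 : y = 0
          · simp [h0]
          · simp [hcon y hy h0]
        have := Set.ncard_le_ncard hsub
        rw [Set.ncard_coe_finset] at this
        exact this.trans Finset.card_le_two
      rw [hcard] at hmul
      nlinarith
    let f : ZMod 4 × ZMod 2 →+ Δ :=
      (ZMod.lift 4 ⟨zmultiplesHom Δ x, by simpa using (natCast_zsmul x 4).trans (h4 x)⟩).coprod
        (ZMod.lift 2 ⟨zmultiplesHom Δ y, by simpa using (natCast_zsmul y 2).trans hy2⟩)
    have hfap : ∀ a b : ℕ, f ((a : ZMod 4), (b : ZMod 2)) = a • x + b • y := by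
      intro a b
      have h1 := ZMod.lift_coe 4 ⟨zmultiplesHom Δ x, by simpa using (natCast_zsmul x 4).trans (h4 x)⟩ (a : ℤ)
      have h2 := ZMod.lift_coe 2 ⟨zmultiplesHom Δ y, by simpa using (natCast_zsmul y 2).trans hy2⟩ (b : ℤ)
      simp at h1 h2
      simp [f, h1, h2]
    have hinj : Function.Injective f := by
      rw [injective_iff_map_eq_zero]
      rintro ⟨a, b⟩ hab
      rw [← ZMod.natCast_zmod_val a, ← ZMod.natCast_zmod_val b, hfap] at hab
      have ha := a.val_lt
      have hb := b.val_lt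
      have h4x := h4 x
      -- For odd `a`, doubling `a x + b y = 0` gives `2x = 0`.
      have hodd : ∀ c : ℕ, (2 * c + 1) • x + b.val • y ≠ 0 := fun c h => hx <| by
        linear_combination (norm := module) (2 : ℤ) • h - b.val • hy2 - c • h4x
      have hodd1 := hodd 1
      have hodd0 := hodd 0
      have h21 : 2 • x + 1 • y ≠ 0 := fun h => hyx <| by
        linear_combination (norm := module) h - h4x
      rw [← ZMod.natCast_zmod_val a, ← ZMod.natCast_zmod_val b]
      generalize a.val = a' at *
      generalize b.val = b' at *
      interval_cases a' <;> interval_cases b' <;> simp_all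
    have hbij : Function.Bijective f := by
      refine (Nat.bijective_iff_injective_and_card f).2 ⟨hinj, ?_⟩
      simp [hcard]
    exact zeroRectangles_four_two.of_addEquiv
      ((AddEquiv.refl (ZMod 3)).prodCongr (AddEquiv.ofBijective f hbij))

/-- For `α ≥ 3` the condition `4Δ = 0` already excludes cyclic groups; for `α = 2` the condition
`2Δ = 0` excludes `ℤ₄`. -/
lemma zeroRectangles_of_two_group.{u} (α : ℕ) : ∀ {Δ : Type u} [AddCommGroup Δ] [Finite Δ],
    2 ≤ α → Nat.card Δ = 2 ^ α → (∀ d : Δ, 4 • d = 0) → (α = 2 → ∀ d : Δ, 2 • d = 0) →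
    ZeroRectangles (ZMod 3 × Δ) := by
  induction α using Nat.strong_induction_on with
  | _ α ih =>
    intro Δ _ _ hα hcard h4 h2
    obtain rfl | rfl | hα4 : α = 2 ∨ α = 3 ∨ 4 ≤ α := by omega
    · have := isAddKleinFour_of_two_torsion hcard (h2 rfl)
      obtain ⟨e⟩ := IsAddKleinFour.nonempty_addEquiv (G₁ := ZMod 2 × ZMod 2) (G₂ := Δ)
      exact zeroRectangles_two_two.of_addEquiv ((AddEquiv.refl (ZMod 3)).prodCongr e)
    · exact zeroRectangles_of_card_eight h4 hcard
    · obtain ⟨H, hH, hH2, hdouble⟩ := exists_klein_addSubgroup h4 hα4 hcard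
      refine .of_quotient H hH hH2 (ih (α - 2) (by omega) (by omega) ?_ ?_ ?_)
      · have h1 := AddSubgroup.card_eq_card_quotient_mul_card_addSubgroup H
        have h2 : 2 ^ α = 2 ^ (α - 2) * 2 ^ 2 := by rw [← pow_add]; congr 1; omega
        rw [hcard, hH] at h1
        omega
      · intro q
        obtain ⟨d, rfl⟩ := QuotientAddGroup.mk_surjective q
        rw [← QuotientAddGroup.mk_nsmul, h4, QuotientAddGroup.mk_zero]
      · intro hα2 q
        obtain ⟨d, rfl⟩ := QuotientAddGroup.mk_surjective q
        rw [← QuotientAddGroup.mk_nsmul, QuotientAddGroup.eq_zero_iff]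
        exact hdouble (by omega) d

theorem stmt9 {Γ Δ : Type*} [AddCommGroup Γ] [Fintype Γ] [AddCommGroup Δ] [Fintype Δ]
    (e : Γ ≃+ ZMod 3 × Δ) (α : ℕ) (hα : 2 ≤ α) (hcard : Fintype.card Δ = 2 ^ α)
    (hinv : 1 < Nat.card {g : Δ // g ≠ 0 ∧ g + g = 0})
    (hexp : AddMonoid.exponent Δ ≤ 4) :
    IsMagicRectangleSet Γ 3 4 (2 ^ (α - 2)) := by
  have hcard' : Nat.card Δ = 2 ^ α := by rw [Nat.card_eq_fintype_card, hcard]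
  have hexp4 : AddMonoid.exponent Δ ∣ 4 := by
    obtain ⟨k, -, hk⟩ := (Nat.dvd_prime_pow Nat.prime_two).1
      (hcard' ▸ AddGroup.exponent_dvd_nat_card : AddMonoid.exponent Δ ∣ 2 ^ α)
    rw [hk] at hexp ⊢
    exact pow_dvd_pow 2 ((Nat.pow_le_pow_iff_right (n := k) (m := 2) (by norm_num)).1 hexp)
  have h4 : ∀ d : Δ, 4 • d = 0 := AddMonoid.exponent_dvd_iff_forall_nsmul_eq_zero.1 hexp4
  have h2 : α = 2 → ∀ d : Δ, 2 • d = 0 := by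
    rintro rfl
    -- The elements killed by `2` number at least three (zero and two involutions), and their number
    -- divides four.
    set Ω := (nsmulAddMonoidHom (α := Δ) 2).ker with hΩ
    have hdvd : Nat.card Ω ∣ 4 := by
      simpa [hcard] using Ω.card_addSubgroup_dvd_card
    have h3 : 3 ≤ Nat.card Ω := by
      have : Nat.card (Option {g : Δ // g ≠ 0 ∧ g + g = 0}) ≤ Nat.card Ω := by
        refine Nat.card_le_card_of_injective
          (fun o => o.elim 0 fun g => ⟨g.1, by simp [hΩ, AddMonoidHom.mem_ker, two_nsmul, g.2.2]⟩)
          ?_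
        rintro (_ | ⟨g, hg, hg'⟩) (_ | ⟨g', hg₂, hg₂'⟩) hgg
        · rfl
        · exact absurd (congrArg Subtype.val hgg).symm hg₂
        · exact absurd (congrArg Subtype.val hgg) hg
        · simpa using hgg
      rw [Finite.card_option] at this
      omega
    have hΩ4 : Nat.card Ω = 4 := by
      have := Nat.le_of_dvd (by norm_num) hdvd
      interval_cases Nat.card Ω <;> omega
    have htop : Ω = ⊤ := AddSubgroup.eq_top_of_card_eq Ω (by rw [hΩ4, hcard']; rfl)
    intro d
    exact (htop ▸ AddSubgroup.mem_top d : d ∈ Ω)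
  obtain ⟨S, x, hb, hr, hc⟩ :=
    (zeroRectangles_of_two_group α hα hcard' h4 h2).of_addEquiv e.symm
  have hS : Nat.card S = 2 ^ (α - 2) := by
    have h1 := Nat.card_eq_of_bijective x hb
    rw [Nat.card_congr e.toEquiv] at h1
    simp only [Nat.card_prod, Nat.card_zmod, Nat.card_fin, hcard'] at h1
    have h2 : 2 ^ α = 2 ^ (α - 2) * 2 ^ 2 := by rw [← pow_add]; congr 1; omega
    omega
  have : Finite S := Nat.finite_of_card_ne_zero (by rw [hS]; positivity)
  let σ : Fin (2 ^ (α - 2)) ≃ S := (Finite.equivFinOfCardEq hS).symm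
  exact ⟨fun p => x (σ p.1, p.2), 0, 0, hb.comp (σ.prodCongr (Equiv.refl _)).bijective,
    fun s i => hr (σ s) i, fun s j => hc (σ s) j⟩
end
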